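/- First Strang lemma: for every w_h ∈ U_h one has ‖u − u_h‖ ≤ (1/c₁)·sup over v_h ∈ V_h, v_h ≠ 0 of |F(v_h) − F_h(v_h)|/‖v_h‖ + (1 + c₄/c₁)·‖u − w_h‖ + (1/c₁)·sup over v_h ∈ V_h, v_h ≠ 0 of |a(w_h,v_h) − a_h(w_h,v_h)|/‖v_h‖. Consequently ‖u − u_h‖ is bounded by the first supremum plus the infimum over w_h ∈ U_h of the last two terms. -/

import Mathlib

/-!
The inf-sup condition controls `‖uₕ - wₕ‖` by the dual norm of `aₕ(uₕ - wₕ, ·)`, which splits as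
`a(u - wₕ, ·) + (a(wₕ, ·) - aₕ(wₕ, ·)) - (F - Fₕ)`; the triangle inequality through `wₕ` concludes.
As a real supremum is `0` when the set is unbounded, one must also know that these functionals are
bounded: the inf-sup condition itself forces this for `aₕ(x, ·)`, since an unbounded functional
would have supremum `0`.
-/

section DualNorm

variable {W : Type*} [NormedAddCommGroup W] [NormedSpace ℝ W]

/-- The dual norm `sup_{v ≠ 0} |f v| / ‖v‖` of a linear functional that is not assumed continuous,
so that it applies to discrete forms given without a bound. As a supremum in `ℝ` it is `0` when `f`
is unbounded; on continuous functionals it is the operator norm. -/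
noncomputable def dualNorm (f : W →ₗ[ℝ] ℝ) : ℝ :=
  sSup {r : ℝ | ∃ v : W, v ≠ 0 ∧ r = |f v| / ‖v‖}

theorem dualNorm_nonneg (f : W →ₗ[ℝ] ℝ) : 0 ≤ dualNorm f := by
  apply Real.sSup_nonneg
  rintro _ ⟨v, -, rfl⟩
  positivity

theorem sSup_div_norm_eq_dualNorm (f : W →ₗ[ℝ] ℝ) :
    sSup {r : ℝ | ∃ v : W, v ≠ 0 ∧ r = f v / ‖v‖} = dualNorm f := by
  apply csSup_eq_csSup_of_forall_exists_le
  · rintro _ ⟨v, hv, rfl⟩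
    exact ⟨_, ⟨v, hv, rfl⟩, by gcongr; exact le_abs_self _⟩
  · rintro _ ⟨v, hv, rfl⟩
    rcases abs_choice (f v) with habs | habs
    · exact ⟨_, ⟨v, hv, rfl⟩, by rw [habs]⟩
    · exact ⟨_, ⟨-v, neg_ne_zero.mpr hv, rfl⟩, by rw [habs, map_neg, norm_neg]⟩

theorem continuous_of_bddAbove_abs_div_norm {f : W →ₗ[ℝ] ℝ}
    (hf : BddAbove {r : ℝ | ∃ v : W, v ≠ 0 ∧ r = |f v| / ‖v‖}) : Continuous f := by
  obtain ⟨M, hM⟩ := hf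
  refine AddMonoidHomClass.continuous_of_bound f M fun v => ?_
  rcases eq_or_ne v 0 with rfl | hv
  · simp
  · exact (div_le_iff₀ (norm_pos_iff.mpr hv)).mp (hM ⟨v, hv, rfl⟩)

theorem dualNorm_of_not_continuous {f : W →ₗ[ℝ] ℝ} (hf : ¬Continuous f) : dualNorm f = 0 :=
  Real.sSup_of_not_bddAbove (mt continuous_of_bddAbove_abs_div_norm hf)

theorem dualNorm_eq_opNorm {f : W →ₗ[ℝ] ℝ} (hf : Continuous f) :
    dualNorm f = ‖(⟨f, hf⟩ : W →L[ℝ] ℝ)‖ := by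
  set φ : W →L[ℝ] ℝ := ⟨f, hf⟩
  have ratio_le : ∀ r ∈ {r : ℝ | ∃ v : W, v ≠ 0 ∧ r = |f v| / ‖v‖}, r ≤ ‖φ‖ := by
    rintro _ ⟨v, -, rfl⟩
    exact φ.ratio_le_opNorm v
  apply le_antisymm
  · exact Real.sSup_le ratio_le (norm_nonneg φ)
  · refine φ.opNorm_le_bound' (dualNorm_nonneg f) fun v hv => ?_
    exact (div_le_iff₀ (by positivity)).mp
      (le_csSup ⟨‖φ‖, ratio_le⟩ ⟨v, norm_ne_zero_iff.mp hv, rfl⟩)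

theorem dualNorm_add_le {f g : W →ₗ[ℝ] ℝ} (hf : Continuous f) (hg : Continuous g) :
    dualNorm (f + g) ≤ dualNorm f + dualNorm g := by
  rw [dualNorm_eq_opNorm hf, dualNorm_eq_opNorm hg, dualNorm_eq_opNorm (hf.add hg)]
  exact norm_add_le (⟨f, hf⟩ : W →L[ℝ] ℝ) ⟨g, hg⟩

theorem dualNorm_sub_le {f g : W →ₗ[ℝ] ℝ} (hf : Continuous f) (hg : Continuous g) :
    dualNorm (f - g) ≤ dualNorm f + dualNorm g := by
  rw [dualNorm_eq_opNorm hf, dualNorm_eq_opNorm hg, dualNorm_eq_opNorm (hf.sub hg)]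
  exact norm_sub_le (⟨f, hf⟩ : W →L[ℝ] ℝ) ⟨g, hg⟩

theorem dualNorm_le_of_bound {f : W →ₗ[ℝ] ℝ} {M : ℝ} (hM : 0 ≤ M) (hf : ∀ v, |f v| ≤ M * ‖v‖) :
    dualNorm f ≤ M := by
  refine Real.sSup_le ?_ hM
  rintro _ ⟨v, hv, rfl⟩
  exact (div_le_iff₀ (norm_pos_iff.mpr hv)).mpr (hf v)

theorem continuous_of_mul_norm_le_dualNorm {X : Type*} [NormedAddCommGroup X] [NormedSpace ℝ X]
    {b : X →ₗ[ℝ] W →ₗ[ℝ] ℝ} {c : ℝ} (hc : 0 < c) {x : X} (hx : c * ‖x‖ ≤ dualNorm (b x)) :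
    Continuous (b x) := by
  by_contra hdisc
  rw [dualNorm_of_not_continuous hdisc] at hx
  have hx0 : x = 0 := norm_le_zero_iff.mp (nonpos_of_mul_nonpos_right hx hc)
  apply hdisc
  rw [hx0, map_zero]
  exact continuous_zero

end DualNorm

section Strang

variable {U W : Type*} [NormedAddCommGroup U] [NormedSpace ℝ U]
  [NormedAddCommGroup W] [NormedSpace ℝ W] {Uh : Submodule ℝ U}
  {a : U →ₗ[ℝ] W →ₗ[ℝ] ℝ} {ah : Uh →ₗ[ℝ] W →ₗ[ℝ] ℝ} {c₁ c₄ : ℝ}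

theorem mul_norm_sub_le_of_infSup (hc₁ : 0 < c₁)
    (hinfsup : ∀ x : Uh, c₁ * ‖x‖ ≤ dualNorm (ah x)) (hc₄ : 0 ≤ c₄)
    (hcont : ∀ x v, |a x v| ≤ c₄ * ‖x‖ * ‖v‖) (u : U) (uh wh : Uh) :
    c₁ * ‖uh - wh‖ ≤
      dualNorm (a u - ah uh) + c₄ * ‖u - wh‖ + dualNorm (a wh - ah wh) := by
  have a_continuous (x : U) : Continuous (a x) :=
    AddMonoidHomClass.continuous_of_bound (a x) (c₄ * ‖x‖) (hcont x)
  have error_continuous (x : U) (xh : Uh) : Continuous (a x - ah xh) :=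
    (a_continuous x).sub (continuous_of_mul_norm_le_dualNorm hc₁ (hinfsup xh))
  have splitting : ah (uh - wh) = a (u - wh) + (a wh - ah wh) - (a u - ah uh) := by
    rw [map_sub, map_sub]
    abel
  calc c₁ * ‖uh - wh‖
      ≤ dualNorm (a (u - wh) + (a wh - ah wh) - (a u - ah uh)) := splitting ▸ hinfsup (uh - wh)
    _ ≤ dualNorm (a (u - wh)) + dualNorm (a wh - ah wh) + dualNorm (a u - ah uh) :=
        (dualNorm_sub_le ((a_continuous _).add (error_continuous _ _))
          (error_continuous _ _)).trans
          (add_le_add_left (dualNorm_add_le (a_continuous _) (error_continuous _ _)) _)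
    _ ≤ c₄ * ‖u - wh‖ + dualNorm (a wh - ah wh) + dualNorm (a u - ah uh) := by
        gcongr
        exact dualNorm_le_of_bound (by positivity) (hcont _)
    _ = dualNorm (a u - ah uh) + c₄ * ‖u - wh‖ + dualNorm (a wh - ah wh) := by ring

theorem norm_sub_le_of_infSup (hc₁ : 0 < c₁)
    (hinfsup : ∀ x : Uh, c₁ * ‖x‖ ≤ dualNorm (ah x)) (hc₄ : 0 ≤ c₄)
    (hcont : ∀ x v, |a x v| ≤ c₄ * ‖x‖ * ‖v‖) (u : U) (uh wh : Uh) :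
    ‖u - uh‖ ≤ (1 / c₁) * dualNorm (a u - ah uh) + (1 + c₄ / c₁) * ‖u - wh‖
      + (1 / c₁) * dualNorm (a wh - ah wh) := by
  have discrete_error : ‖uh - wh‖ ≤
      (dualNorm (a u - ah uh) + c₄ * ‖u - wh‖ + dualNorm (a wh - ah wh)) / c₁ :=
    (le_div_iff₀' hc₁).mpr (mul_norm_sub_le_of_infSup hc₁ hinfsup hc₄ hcont u uh wh)
  calc ‖u - uh‖
      ≤ ‖u - wh‖ + ‖uh - wh‖ := by
        simpa only [norm_sub_rev (wh : U), Submodule.coe_norm, Submodule.coe_sub] using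
          norm_sub_le_norm_sub_add_norm_sub u (wh : U) uh
    _ ≤ ‖u - wh‖
          + (dualNorm (a u - ah uh) + c₄ * ‖u - wh‖ + dualNorm (a wh - ah wh)) / c₁ := by gcongr
    _ = (1 / c₁) * dualNorm (a u - ah uh) + (1 + c₄ / c₁) * ‖u - wh‖
          + (1 / c₁) * dualNorm (a wh - ah wh) := by ring

theorem first_strang_lemma_general {F Fh : W →ₗ[ℝ] ℝ} (hc₁ : 0 < c₁)
    (hinfsup : ∀ x : Uh, c₁ * ‖x‖ ≤ dualNorm (ah x)) (hc₄ : 0 ≤ c₄)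
    (hcont : ∀ x v, |a x v| ≤ c₄ * ‖x‖ * ‖v‖)
    {u : U} (hu : a u = F) {uh : Uh} (huh : ah uh = Fh) :
    (∀ wh : Uh, ‖u - uh‖ ≤ (1 / c₁) * dualNorm (F - Fh) + (1 + c₄ / c₁) * ‖u - wh‖
      + (1 / c₁) * dualNorm (a wh - ah wh)) ∧
    ‖u - uh‖ ≤ (1 / c₁) * dualNorm (F - Fh)
      + sInf {s : ℝ | ∃ wh : Uh,
          s = (1 + c₄ / c₁) * ‖u - wh‖ + (1 / c₁) * dualNorm (a wh - ah wh)} := by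
  subst hu huh
  have bound := norm_sub_le_of_infSup hc₁ hinfsup hc₄ hcont u uh
  refine ⟨bound, ?_⟩
  rw [← sub_le_iff_le_add']
  refine le_csInf ⟨_, 0, rfl⟩ ?_
  rintro _ ⟨wh, rfl⟩
  rw [sub_le_iff_le_add', ← add_assoc]
  exact bound wh

end Strang

/-- **First Strang lemma.** Let `U_h ⊆ U`, `V_h ⊆ V` be subspaces, `a_h` a discrete
bilinear form satisfying the discrete inf-sup condition with constant `c₁ > 0`, and
let `a` satisfy `|a(u, v_h)| ≤ c₄‖u‖‖v_h‖`. If `u` solves the continuous problem and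
`u_h` the discrete one, then for every `w_h ∈ U_h`,
`‖u − u_h‖ ≤ (1/c₁)·sup_{v_h ≠ 0} |F v_h − F_h v_h|/‖v_h‖ + (1 + c₄/c₁)‖u − w_h‖
  + (1/c₁)·sup_{v_h ≠ 0} |a(w_h, v_h) − a_h(w_h, v_h)|/‖v_h‖`,
and consequently `‖u − u_h‖` is bounded by the first supremum plus the infimum over
`w_h ∈ U_h` of the last two terms. -/
theorem first_strang_lemma
    {U V : Type*} [NormedAddCommGroup U] [NormedSpace ℝ U]
    [NormedAddCommGroup V] [NormedSpace ℝ V]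
    (Uh : Submodule ℝ U) (Vh : Submodule ℝ V)
    (a : U →ₗ[ℝ] V →ₗ[ℝ] ℝ) (ah : Uh →ₗ[ℝ] Vh →ₗ[ℝ] ℝ)
    (F : V →ₗ[ℝ] ℝ) (Fh : Vh →ₗ[ℝ] ℝ)
    (c₁ : ℝ) (hc₁ : 0 < c₁)
    (hinfsup : ∀ uh : Uh,
      c₁ * ‖uh‖ ≤ sSup {r : ℝ | ∃ vh : Vh, vh ≠ 0 ∧ r = ah uh vh / ‖vh‖})
    (c₄ : ℝ) (hc₄ : 0 < c₄)
    (hcont : ∀ (x : U) (vh : Vh), |a x (vh : V)| ≤ c₄ * ‖x‖ * ‖vh‖)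
    (u : U) (hu : ∀ v : V, a u v = F v)
    (uh : Uh) (huh : ∀ vh : Vh, ah uh vh = Fh vh) :
    (∀ wh : Uh,
      ‖u - (uh : U)‖ ≤
        (1 / c₁) * sSup {r : ℝ | ∃ vh : Vh, vh ≠ 0 ∧ r = |F (vh : V) - Fh vh| / ‖vh‖}
        + (1 + c₄ / c₁) * ‖u - (wh : U)‖
        + (1 / c₁) * sSup {r : ℝ | ∃ vh : Vh, vh ≠ 0 ∧
            r = |a (wh : U) (vh : V) - ah wh vh| / ‖vh‖}) ∧
    ‖u - (uh : U)‖ ≤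
      (1 / c₁) * sSup {r : ℝ | ∃ vh : Vh, vh ≠ 0 ∧ r = |F (vh : V) - Fh vh| / ‖vh‖}
      + sInf {s : ℝ | ∃ wh : Uh,
          s = (1 + c₄ / c₁) * ‖u - (wh : U)‖
            + (1 / c₁) * sSup {r : ℝ | ∃ vh : Vh, vh ≠ 0 ∧
                r = |a (wh : U) (vh : V) - ah wh vh| / ‖vh‖}} := by
  exact first_strang_lemma_general (a := a.compl₂ Vh.subtype) (F := F ∘ₗ Vh.subtype) hc₁
    (fun x => sSup_div_norm_eq_dualNorm (ah x) ▸ hinfsup x) hc₄.le hcont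
    (LinearMap.ext fun vh => hu vh) (LinearMap.ext huh)
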